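/- Fix j ≥ 1 and let C_{≤j} = {x ∈ ℝ_+^∞ : at most j coordinates of x are positive} (a closed subset of ℝ_+^∞) and O_j = ℝ_+^∞ \ C_{≤j}. For m ≥ j, indices i_1 < ... < i_m and a_1, ..., a_m > 0, let A_{m,i,a} = {x ∈ ℝ_+^∞ : x_{i_k} > a_k for k = 1, ..., m}, and let 𝔸_{≥j} denote the collection of all such sets. If μ_t (t > 0) and μ are elements of M(O_j) and lim_{t→∞} μ_t(A) = μ(A) for every A ∈ 𝔸_{≥j} that is bounded away from C_{≤j} and satisfies μ(∂A) = 0, then μ_t → μ in M(O_j) as t → ∞. -/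

import Mathlib

open MeasureTheory Filter Topology Set ENNReal NNReal

noncomputable section

/-- The metric `d_∞` on `ℝ₊^∞ = (ℕ → ℝ≥0)` (indices shifted so that `x_1 = x 0`):
`d_∞(x,y) = Σ_{i≥1} 2^{-i} (|x_i − y_i| ∧ 1)`. -/
def dseq (x y : ℕ → ℝ≥0) : ℝ := ∑' i : ℕ, (2 : ℝ)⁻¹ ^ (i + 1) * min (dist (x i) (y i)) 1

/-- The `d_∞`-distance from a point to a set. -/
def dseqSet (x : ℕ → ℝ≥0) (C : Set (ℕ → ℝ≥0)) : ℝ := sInf (dseq x '' C)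

/-- `A` is bounded away from `C` in the metric `d_∞`. -/
def BddAwaySeq (C A : Set (ℕ → ℝ≥0)) : Prop := ∃ r > 0, ∀ x ∈ A, r ≤ dseqSet x C

/-- The class `C(ℝ₊^∞ \ C)` of test functions: bounded, nonnegative, continuous off `C`,
vanishing at `d_∞`-distance `< r` from `C` for some `r > 0`. -/
def IsCOseq (C : Set (ℕ → ℝ≥0)) (f : (ℕ → ℝ≥0) → ℝ) : Prop :=
  ContinuousOn f Cᶜ ∧ (∀ x, 0 ≤ f x) ∧ (∃ B : ℝ, ∀ x, f x ≤ B) ∧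
    ∃ r > 0, ∀ x, dseqSet x C < r → f x = 0

/-- The class `M(ℝ₊^∞ \ C)`: Borel measures giving no mass to `C` and finite mass to
each region at `d_∞`-distance at least `r > 0` from `C`. -/
def MemMOseq (C : Set (ℕ → ℝ≥0)) (μ : Measure (ℕ → ℝ≥0)) : Prop :=
  μ C = 0 ∧ ∀ r : ℝ, 0 < r → μ {x | r ≤ dseqSet x C} < ⊤

/-- Convergence in `M(ℝ₊^∞ \ C)`. -/
def MOTendstoSeq (C : Set (ℕ → ℝ≥0)) (μn : ℕ → Measure (ℕ → ℝ≥0))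
    (μ : Measure (ℕ → ℝ≥0)) : Prop :=
  ∀ f : (ℕ → ℝ≥0) → ℝ, IsCOseq C f →
    Tendsto (fun n => ∫ x, f x ∂ μn n) atTop (𝓝 (∫ x, f x ∂ μ))

/-- `C_{≤j}`: sequences with at most `j` positive coordinates. -/
def Cle (j : ℕ) : Set (ℕ → ℝ≥0) :=
  {x | {i | x i ≠ 0}.Finite ∧ {i | x i ≠ 0}.ncard ≤ j}

/-- The sequences exceeding, in coordinate `p.1`, the level `p.2`, for every `p ∈ L`. -/
def orthant (L : Finset (ℕ × ℝ≥0)) : Set (ℕ → ℝ≥0) := {x | ∀ p ∈ L, p.2 < x p.1}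

/-- An orthant with additional upper bounds on finitely many coordinates. -/
def box (L M : Finset (ℕ × ℝ≥0)) : Set (ℕ → ℝ≥0) :=
  {x | (∀ p ∈ L, p.2 < x p.1) ∧ ∀ p ∈ M, x p.1 ≤ p.2}

/-- The levels are positive and not charged by `μ`. -/
def ContLevels (μ : Measure (ℕ → ℝ≥0)) (L : Finset (ℕ × ℝ≥0)) : Prop :=
  ∀ p ∈ L, 0 < p.2 ∧ μ {x | x p.1 = p.2} = 0

/-- The boxes with uncharged levels constraining more than `j` coordinates from below. -/
def contBoxes (j : ℕ) (μ : Measure (ℕ → ℝ≥0)) : Set (Set (ℕ → ℝ≥0)) :=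
  {A | ∃ L M, ContLevels μ L ∧ ContLevels μ M ∧ j < (L.image Prod.fst).card ∧ A = box L M}

lemma box_empty_right (L : Finset (ℕ × ℝ≥0)) : box L ∅ = orthant L := by
  simp [box, orthant]

lemma box_subset_orthant (L M : Finset (ℕ × ℝ≥0)) : box L M ⊆ orthant L := fun _ hx => hx.1

lemma isOpen_orthant (L : Finset (ℕ × ℝ≥0)) : IsOpen (orthant L) := by
  have : orthant L = ⋂ p ∈ L, {x : ℕ → ℝ≥0 | p.2 < x p.1} := by ext; simp [orthant]
  rw [this]
  exact isOpen_biInter_finset fun p _ => isOpen_lt continuous_const (continuous_apply _)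

lemma measurableSet_box (L M : Finset (ℕ × ℝ≥0)) : MeasurableSet (box L M) := by
  have : box L M = orthant L ∩ ⋂ p ∈ M, {x : ℕ → ℝ≥0 | x p.1 ≤ p.2} := by
    ext; simp [orthant, box]
  rw [this]
  refine (isOpen_orthant L).measurableSet.inter (IsClosed.measurableSet ?_)
  exact isClosed_biInter fun p _ => isClosed_le (continuous_apply _) continuous_const

lemma box_inter_box (L M L' M' : Finset (ℕ × ℝ≥0)) :
    box L M ∩ box L' M' = box (L ∪ L') (M ∪ M') := by
  ext x
  simp only [box, mem_inter_iff, mem_ofPred_eq, Finset.mem_union]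
  grind

lemma contLevels_union {μ : Measure (ℕ → ℝ≥0)} {L M : Finset (ℕ × ℝ≥0)}
    (hL : ContLevels μ L) (hM : ContLevels μ M) : ContLevels μ (L ∪ M) := by
  intro p hp
  rcases Finset.mem_union.1 hp with h | h
  exacts [hL p h, hM p h]

lemma inter_mem_contBoxes {j : ℕ} {μ : Measure (ℕ → ℝ≥0)} {A B : Set (ℕ → ℝ≥0)}
    (hA : A ∈ contBoxes j μ) (hB : B ∈ contBoxes j μ) : A ∩ B ∈ contBoxes j μ := by
  obtain ⟨L, M, hL, hM, hc, rfl⟩ := hA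
  obtain ⟨L', M', hL', hM', -, rfl⟩ := hB
  refine ⟨L ∪ L', M ∪ M', contLevels_union hL hL', contLevels_union hM hM', ?_,
    box_inter_box _ _ _ _⟩
  exact hc.trans_le (Finset.card_le_card (Finset.image_subset_image Finset.subset_union_left))

lemma summable_dseq (x y : ℕ → ℝ≥0) :
    Summable fun i : ℕ => (2 : ℝ)⁻¹ ^ (i + 1) * min (dist (x i) (y i)) 1 := by
  have hs : Summable fun i : ℕ => (2 : ℝ)⁻¹ ^ (i + 1) :=
    (_root_.summable_nat_add_iff 1).2 (summable_geometric_of_lt_one (by norm_num) (by norm_num))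
  refine Summable.of_nonneg_of_le (fun i => by positivity) (fun i => ?_) hs
  exact mul_le_of_le_one_right (by positivity) (min_le_right _ _)

lemma zero_mem_Cle (j : ℕ) : (0 : ℕ → ℝ≥0) ∈ Cle j := by simp [Cle]

lemma le_dseq (x y : ℕ → ℝ≥0) (i : ℕ) :
    (2 : ℝ)⁻¹ ^ (i + 1) * min (dist (x i) (y i)) 1 ≤ dseq x y :=
  (summable_dseq x y).le_tsum i fun _ _ => by positivity

lemma dseqSet_le_dseq {C : Set (ℕ → ℝ≥0)} (x : ℕ → ℝ≥0) {y : ℕ → ℝ≥0} (hy : y ∈ C) :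
    dseqSet x C ≤ dseq x y := by
  refine csInf_le ⟨0, ?_⟩ (mem_image_of_mem _ hy)
  rintro _ ⟨z, -, rfl⟩
  exact tsum_nonneg fun i => by positivity

/-- Exceeding positive levels in more than `j` coordinates keeps away from `Cle j`. -/
lemma bddAwaySeq_orthant {j : ℕ} {L : Finset (ℕ × ℝ≥0)} (hpos : ∀ p ∈ L, 0 < p.2)
    (hc : j < (L.image Prod.fst).card) : BddAwaySeq (Cle j) (orthant L) := by
  have hne : L.Nonempty := by
    by_contra h
    simp [Finset.not_nonempty_iff_eq_empty.1 h] at hc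
  obtain ⟨q, hq, hmin⟩ := L.exists_min_image
    (fun p => (2 : ℝ)⁻¹ ^ (p.1 + 1) * min (p.2 : ℝ) 1) hne
  have hq0 : (0 : ℝ) < q.2 := NNReal.coe_pos.2 (hpos q hq)
  refine ⟨_, show 0 < (2 : ℝ)⁻¹ ^ (q.1 + 1) * min (q.2 : ℝ) 1 by positivity, fun x hx => ?_⟩
  refine le_csInf ⟨_, mem_image_of_mem _ (zero_mem_Cle j)⟩ ?_
  rintro _ ⟨y, ⟨hfin, hcard⟩, rfl⟩
  obtain ⟨i, hi, hy⟩ : ∃ i ∈ L.image Prod.fst, y i = 0 := by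
    by_contra! hcon
    have := ncard_le_ncard (s := (L.image Prod.fst : Finset ℕ)) (t := {i | y i ≠ 0})
      (fun i hi => hcon i hi) hfin
    rw [ncard_coe_finset] at this
    omega
  obtain ⟨p, hp, rfl⟩ := Finset.mem_image.1 hi
  refine (hmin p hp).trans (le_trans ?_ (le_dseq x y p.1))
  have : (p.2 : ℝ) ≤ dist (x p.1) (y p.1) := by
    rw [hy, NNReal.dist_eq]
    simpa using (hx p hp).le
  gcongr

lemma orthant_lt_top {j : ℕ} {ν : Measure (ℕ → ℝ≥0)} (hν : MemMOseq (Cle j) ν)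
    {L : Finset (ℕ × ℝ≥0)} (hpos : ∀ p ∈ L, 0 < p.2)
    (hc : j < (L.image Prod.fst).card) : ν (orthant L) < ⊤ := by
  obtain ⟨r, hr, h⟩ := bddAwaySeq_orthant hpos hc
  exact (measure_mono h).trans_lt (hν.2 r hr)

lemma contBoxes_lt_top {j : ℕ} {μ ν : Measure (ℕ → ℝ≥0)} (hν : MemMOseq (Cle j) ν)
    {A : Set (ℕ → ℝ≥0)} (hA : A ∈ contBoxes j μ) : ν A < ⊤ := by
  obtain ⟨L, M, hL, hM, hc, rfl⟩ := hA
  exact (measure_mono (box_subset_orthant L M)).trans_lt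
    (orthant_lt_top hν (fun p hp => (hL p hp).1) hc)

lemma exists_card_of_notMem_Cle {j : ℕ} {x : ℕ → ℝ≥0} (hx : x ∉ Cle j) :
    ∃ G : Finset ℕ, G.card = j + 1 ∧ ∀ i ∈ G, 0 < x i := by
  by_cases hf : {i | x i ≠ 0}.Finite
  · have hc : j + 1 ≤ {i | x i ≠ 0}.ncard := by
      by_contra h
      exact hx ⟨hf, by omega⟩
    rw [ncard_eq_toFinset_card _ hf] at hc
    obtain ⟨G, hG, hGc⟩ := Finset.exists_subset_card_eq hc
    exact ⟨G, hGc, fun i hi => pos_iff_ne_zero.2 (by simpa using hG hi)⟩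
  · obtain ⟨G, hG, hGc⟩ := Set.Infinite.exists_subset_card_eq hf (j + 1)
    exact ⟨G, hGc, fun i hi => pos_iff_ne_zero.2 (hG hi)⟩

lemma image_fst_graph (F : Finset ℕ) (a : ℕ → ℝ≥0) :
    (F.image fun i => (i, a i)).image Prod.fst = F := by
  rw [Finset.image_image]
  exact Finset.image_id

lemma mem_orthant_graph {F : Finset ℕ} {a x : ℕ → ℝ≥0} :
    x ∈ orthant (F.image fun i => (i, a i)) ↔ ∀ i ∈ F, a i < x i := by
  simp [orthant]

lemma dseqSet_pos {j : ℕ} {x : ℕ → ℝ≥0} (hx : x ∉ Cle j) : 0 < dseqSet x (Cle j) := by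
  obtain ⟨G, hG, hpos⟩ := exists_card_of_notMem_Cle hx
  obtain ⟨r, hr, h⟩ := bddAwaySeq_orthant (j := j) (L := G.image fun i => (i, x i / 2))
    (by
      intro p hp
      obtain ⟨i, hi, rfl⟩ := Finset.mem_image.1 hp
      exact half_pos (hpos i hi))
    (by rw [image_fst_graph]; omega)
  exact hr.trans_le (h x (mem_orthant_graph.2 fun i hi => NNReal.half_lt_self (hpos i hi).ne'))

lemma notMem_Cle_of_dseqSet_pos {j : ℕ} {x : ℕ → ℝ≥0} (hx : 0 < dseqSet x (Cle j)) :
    x ∉ Cle j := by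
  intro h
  have := dseqSet_le_dseq x h
  simp [dseq] at this
  linarith

lemma orthant_subset_compl {j : ℕ} {L : Finset (ℕ × ℝ≥0)} (hpos : ∀ p ∈ L, 0 < p.2)
    (hc : j < (L.image Prod.fst).card) : orthant L ⊆ (Cle j)ᶜ := by
  obtain ⟨r, hr, h⟩ := bddAwaySeq_orthant hpos hc
  exact fun x hx => notMem_Cle_of_dseqSet_pos (hr.trans_le (h x hx))

lemma sigmaFinite_of_memMOseq {j : ℕ} {μ : Measure (ℕ → ℝ≥0)} (hμ : MemMOseq (Cle j) μ) :
    SigmaFinite μ := by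
  refine ⟨⟨⟨fun n : ℕ => Cle j ∪ {x | 1 / ((n : ℝ) + 1) ≤ dseqSet x (Cle j)},
    fun _ => mem_univ _, fun n => ?_, ?_⟩⟩⟩
  · refine (measure_union_le _ _).trans_lt ?_
    rw [hμ.1, zero_add]
    exact hμ.2 _ (by positivity)
  · refine eq_univ_of_forall fun x => mem_iUnion.2 ?_
    by_cases hx : x ∈ Cle j
    · exact ⟨0, Or.inl hx⟩
    · obtain ⟨n, hn⟩ := exists_nat_one_div_lt (dseqSet_pos hx)
      exact ⟨n, Or.inr hn.le⟩

/-- Uncharged positive levels are dense. -/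
lemma exists_level_between {μ : Measure (ℕ → ℝ≥0)} [SigmaFinite μ] (i : ℕ) {u v : ℝ≥0}
    (huv : u < v) : ∃ c, u < c ∧ c < v ∧ 0 < c ∧ μ {x | x i = c} = 0 := by
  have hcount : {c : ℝ≥0 | 0 < μ {x : ℕ → ℝ≥0 | x i = c}}.Countable :=
    Measure.countable_meas_level_set_pos (measurable_pi_apply i)
  obtain ⟨c, hc, hc'⟩ := ((hcount.image NNReal.toReal).dense_compl ℝ).exists_between
    (NNReal.coe_lt_coe.2 huv)
  lift c to ℝ≥0 using u.coe_nonneg.trans hc'.1.le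
  have hu : u < c := NNReal.coe_lt_coe.1 hc'.1
  refine ⟨c, hu, NNReal.coe_lt_coe.1 hc'.2, hu.bot_lt, ?_⟩
  by_contra h
  exact hc ⟨c, pos_iff_ne_zero.2 h, rfl⟩

lemma exists_levels_nhds {μ : Measure (ℕ → ℝ≥0)} [SigmaFinite μ] (i : ℕ) (y : ℝ≥0)
    {u : Set ℝ≥0} (hu : u ∈ 𝓝 y) :
    ∃ a b : ℝ≥0, (0 < a ∧ μ {x | x i = a} = 0) ∧ (0 < b ∧ μ {x | x i = b} = 0) ∧ y < b ∧
      (0 < y → a < y) ∧ ∀ z, (0 < y → a < z) → z ≤ b → z ∈ u := by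
  obtain ⟨d, hd, hdu⟩ := exists_Ico_subset_of_mem_nhds hu ⟨y + 1, by simp⟩
  obtain ⟨b, hyb, hbd, hb⟩ := exists_level_between (μ := μ) i hd
  rcases eq_zero_or_pos y with rfl | hy
  · exact ⟨b, b, hb, hb, hyb, fun h => absurd h (lt_irrefl _),
      fun z _ hz => hdu ⟨zero_le, hz.trans_lt hbd⟩⟩
  · obtain ⟨c, hc, hcu⟩ := exists_Ioc_subset_of_mem_nhds hu ⟨0, hy⟩
    obtain ⟨a, hca, hay, ha⟩ := exists_level_between (μ := μ) i hc
    refine ⟨a, b, ha, hb, hyb, fun _ => hay, fun z hz hzb => ?_⟩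
    rcases le_total z y with h | h
    · exact hcu ⟨hca.trans (hz hy), h⟩
    · exact hdu ⟨h, hzb.trans_lt hbd⟩

/-- Off `Cle j`, the interiors of the boxes in `contBoxes j μ` form a basis of the topology. -/
lemma exists_contBox_nhds {j : ℕ} {μ : Measure (ℕ → ℝ≥0)} [SigmaFinite μ] {x : ℕ → ℝ≥0}
    (hx : x ∉ Cle j) {V : Set (ℕ → ℝ≥0)} (hV : IsOpen V) (hxV : x ∈ V) :
    ∃ A ∈ contBoxes j μ, x ∈ interior A ∧ A ⊆ V := by
  obtain ⟨I, u, hu, hsub⟩ := isOpen_pi_iff.1 hV x hxV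
  obtain ⟨G, hG, hpos⟩ := exists_card_of_notMem_Cle hx
  have key : ∀ i, ∃ a b : ℝ≥0, (0 < a ∧ μ {x | x i = a} = 0) ∧ (0 < b ∧ μ {x | x i = b} = 0) ∧
      x i < b ∧ (0 < x i → a < x i) ∧
      ∀ z, (0 < x i → a < z) → z ≤ b → (i ∈ I → z ∈ u i) := by
    intro i
    by_cases hi : i ∈ I
    · obtain ⟨a, b, ha, hb, h1, h2, h3⟩ := exists_levels_nhds (μ := μ) i (x i)
        ((hu i hi).1.mem_nhds (hu i hi).2)
      exact ⟨a, b, ha, hb, h1, h2, fun z h h' _ => h3 z h h'⟩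
    · obtain ⟨a, b, ha, hb, h1, h2, -⟩ := exists_levels_nhds (μ := μ) i (x i) univ_mem
      exact ⟨a, b, ha, hb, h1, h2, fun z _ _ h => absurd h hi⟩
  choose a b ha hb hxb hax hmem using key
  let F := (I ∪ G).filter fun i => 0 < x i
  have hF : ∀ i ∈ F, 0 < x i := fun i hi => (Finset.mem_filter.1 hi).2
  refine ⟨box (F.image fun i => (i, a i)) (I.image fun i => (i, b i)), ⟨_, _, ?_, ?_, ?_, rfl⟩,
    ?_, ?_⟩
  · intro p hp
    obtain ⟨i, -, rfl⟩ := Finset.mem_image.1 hp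
    exact ha i
  · intro p hp
    obtain ⟨i, -, rfl⟩ := Finset.mem_image.1 hp
    exact hb i
  · rw [image_fst_graph]
    have : G ⊆ F := fun i hi =>
      Finset.mem_filter.2 ⟨Finset.mem_union_right _ hi, hpos i hi⟩
    have := Finset.card_le_card this
    omega
  · refine mem_interior.2 ⟨orthant (F.image fun i => (i, a i)) ∩ ⋂ i ∈ I, {z | z i < b i},
      ?_, (isOpen_orthant _).inter (isOpen_biInter_finset fun i _ =>
        isOpen_lt (continuous_apply i) continuous_const), ?_, ?_⟩
    · rintro z ⟨hz, hz'⟩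
      refine ⟨hz, fun p hp => ?_⟩
      obtain ⟨i, hi, rfl⟩ := Finset.mem_image.1 hp
      exact (mem_iInter₂.1 hz' i hi).le
    · exact mem_orthant_graph.2 fun i hi => hax i (hF i hi)
    · exact mem_iInter₂.2 fun i _ => hxb i
  · rintro z ⟨hz, hz'⟩
    refine hsub fun i hi => hmem i (z i) (fun h => ?_) ?_ hi
    · exact hz (i, a i) (Finset.mem_image_of_mem _
        (Finset.mem_filter.2 ⟨Finset.mem_union_left _ hi, h⟩))
    · exact hz' (i, b i) (Finset.mem_image_of_mem _ hi)

lemma frontier_orthant_subset (L : Finset (ℕ × ℝ≥0)) :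
    frontier (orthant L) ⊆ ⋃ p ∈ L, {x | x p.1 = p.2} := by
  rw [(isOpen_orthant L).frontier_eq]
  rintro x ⟨hx, hx'⟩
  have hcl : closure (orthant L) ⊆ ⋂ p ∈ L, {x : ℕ → ℝ≥0 | p.2 ≤ x p.1} :=
    closure_minimal (fun z hz => mem_iInter₂.2 fun p hp => (hz p hp).le)
      (isClosed_biInter fun p _ => isClosed_le continuous_const (continuous_apply _))
  obtain ⟨p, hp, hle⟩ : ∃ p ∈ L, x p.1 ≤ p.2 := by
    by_contra! hcon
    exact hx' hcon
  exact mem_iUnion₂.2 ⟨p, hp, hle.antisymm (mem_iInter₂.1 (hcl hx) p hp)⟩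

/-- An orthant has one effective level per constrained coordinate. -/
lemma orthant_eq_setOf_fin (L : Finset (ℕ × ℝ≥0)) (hpos : ∀ p ∈ L, 0 < p.2) :
    ∃ (iv : Fin (L.image Prod.fst).card → ℕ) (a : Fin (L.image Prod.fst).card → ℝ≥0),
      StrictMono iv ∧ (∀ k, 0 < a k) ∧ orthant L = {x | ∀ k, a k < x (iv k)} := by
  set G := L.image Prod.fst
  have key : ∀ i ∈ G, ∃ p ∈ L, p.1 = i ∧ ∀ q ∈ L, q.1 = i → q.2 ≤ p.2 := by
    intro i hi
    obtain ⟨q, hq, rfl⟩ := Finset.mem_image.1 hi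
    obtain ⟨p, hp, hmax⟩ := (L.filter fun p => p.1 = q.1).exists_max_image Prod.snd
      ⟨q, Finset.mem_filter.2 ⟨hq, rfl⟩⟩
    rw [Finset.mem_filter] at hp
    exact ⟨p, hp.1, hp.2, fun r hr hrq => hmax r (Finset.mem_filter.2 ⟨hr, hrq⟩)⟩
  have hmem : ∀ k, G.orderEmbOfFin rfl k ∈ G := fun k => Finset.orderEmbOfFin_mem _ _ _
  choose p hpL hpi hpmax using fun k => key _ (hmem k)
  refine ⟨G.orderEmbOfFin rfl, fun k => (p k).2, OrderEmbedding.strictMono _,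
    fun k => hpos _ (hpL k), ?_⟩
  ext x
  refine ⟨fun hx k => ?_, fun hx q hq => ?_⟩
  · have := hx (p k) (hpL k)
    rwa [hpi k] at this
  · have hqG : q.1 ∈ G := Finset.mem_image_of_mem _ hq
    obtain ⟨k, hk⟩ : q.1 ∈ range (G.orderEmbOfFin rfl) := by
      rw [Finset.range_orderEmbOfFin]; exact hqG
    refine (hpmax k q hq hk.symm).trans_lt ?_
    rw [← hk]
    exact hx k

/-- Convergence on the orthants passes to boxes, bounding the coordinates one by one. -/
lemma tendsto_contBoxes {j : ℕ} {ι : Type*} {l : Filter ι} {ν : ι → Measure (ℕ → ℝ≥0)}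
    {μ : Measure (ℕ → ℝ≥0)} (hν : ∀ t, MemMOseq (Cle j) (ν t)) (hμ : MemMOseq (Cle j) μ)
    (h : ∀ L, ContLevels μ L → j < (L.image Prod.fst).card →
      Tendsto (fun t => ν t (orthant L)) l (𝓝 (μ (orthant L))))
    {A : Set (ℕ → ℝ≥0)} (hA : A ∈ contBoxes j μ) :
    Tendsto (fun t => ν t A) l (𝓝 (μ A)) := by
  obtain ⟨L, M, hL, hM, hc, rfl⟩ := hA
  induction M using Finset.induction_on generalizing L with
  | empty => simpa only [box_empty_right] using h L hL hc
  | insert p M hp ih =>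
    have hM' : ContLevels μ M := fun q hq => hM q (Finset.mem_insert_of_mem hq)
    have hL' : ContLevels μ (insert p L) := by
      intro q hq
      rcases Finset.mem_insert.1 hq with rfl | hq
      exacts [hM _ (Finset.mem_insert_self _ _), hL q hq]
    have hc' : j < ((insert p L).image Prod.fst).card :=
      hc.trans_le (Finset.card_le_card (Finset.image_subset_image (Finset.subset_insert _ _)))
    have hsub : box (insert p L) M ⊆ box L M := fun x hx =>
      ⟨fun q hq => hx.1 q (Finset.mem_insert_of_mem hq), hx.2⟩
    have hdiff : box L (insert p M) = box L M \ box (insert p L) M := by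
      ext x
      simp only [box, Set.mem_sdiff, mem_ofPred_eq, Finset.forall_mem_insert, ← not_lt]
      tauto
    have hfin : ∀ {ρ}, MemMOseq (Cle j) ρ → ρ (box (insert p L) M) ≠ ⊤ := fun hρ =>
      (contBoxes_lt_top hρ ⟨_, _, hL', hM', hc', rfl⟩).ne
    have hmeas : ∀ {ρ}, MemMOseq (Cle j) ρ →
        ρ (box L (insert p M)) = ρ (box L M) - ρ (box (insert p L) M) := fun hρ => by
      rw [hdiff, measure_sdiff hsub (measurableSet_box _ _).nullMeasurableSet (hfin hρ)]
    simp only [hmeas (hν _), hmeas hμ]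
    exact ENNReal.Tendsto.sub (ih L hL hM' hc) (ih _ hL' hM' hc') (Or.inr (hfin hμ))

/-- Convergence on a class of sets closed under intersections passes to finite unions. -/
lemma tendsto_measure_biUnion_of_inter {α ι κ : Type*} [MeasurableSpace α] {l : Filter ι}
    {ν : ι → Measure α} {μ : Measure α} {P : Set (Set α)}
    (hinter : ∀ A ∈ P, ∀ B ∈ P, A ∩ B ∈ P) (hmeas : ∀ A ∈ P, MeasurableSet A)
    (hν : ∀ t, ∀ A ∈ P, ν t A < ⊤) (hμ : ∀ A ∈ P, μ A < ⊤)
    (h : ∀ A ∈ P, Tendsto (fun t => ν t A) l (𝓝 (μ A)))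
    (s : Finset κ) (A : κ → Set α) (hA : ∀ k ∈ s, A k ∈ P) :
    Tendsto (fun t => ν t (⋃ k ∈ s, A k)) l (𝓝 (μ (⋃ k ∈ s, A k))) := by
  classical
  induction s using Finset.induction_on generalizing A with
  | empty => simpa using tendsto_const_nhds
  | insert k s hk ih =>
    have hk' : A k ∈ P := hA k (Finset.mem_insert_self _ _)
    have hs : ∀ i ∈ s, A i ∈ P := fun i hi => hA i (Finset.mem_insert_of_mem hi)
    have hms : MeasurableSet (⋃ i ∈ s, A i) :=
      s.measurableSet_biUnion fun i hi => hmeas _ (hs i hi)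
    have heq : ∀ ρ : Measure α, ρ (A k) < ⊤ → ρ (⋃ i ∈ insert k s, A i) =
        ρ (A k) + ρ (⋃ i ∈ s, A i) - ρ (⋃ i ∈ s, A k ∩ A i) := by
      intro ρ hρ
      rw [← inter_iUnion₂, ← measure_union_add_inter _ hms, Finset.set_biUnion_insert,
        ENNReal.add_sub_cancel_right ((measure_mono inter_subset_left).trans_lt hρ).ne]
    have hfin : μ (⋃ i ∈ s, A k ∩ A i) ≠ ⊤ := by
      rw [← inter_iUnion₂]
      exact ((measure_mono inter_subset_left).trans_lt (hμ _ hk')).ne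
    simp only [heq _ (hν _ _ hk'), heq _ (hμ _ hk')]
    exact ENNReal.Tendsto.sub ((h _ hk').add (ih A hs))
      (ih (fun i => A k ∩ A i) fun i hi => hinter _ hk' _ (hs i hi)) (Or.inr hfin)

lemma tendsto_biUnion_contBoxes {j : ℕ} {ι κ : Type*} {l : Filter ι}
    {ν : ι → Measure (ℕ → ℝ≥0)} {μ : Measure (ℕ → ℝ≥0)}
    (hν : ∀ t, MemMOseq (Cle j) (ν t)) (hμ : MemMOseq (Cle j) μ)
    (h : ∀ L, ContLevels μ L → j < (L.image Prod.fst).card →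
      Tendsto (fun t => ν t (orthant L)) l (𝓝 (μ (orthant L))))
    (s : Finset κ) (A : κ → Set (ℕ → ℝ≥0)) (hA : ∀ k ∈ s, A k ∈ contBoxes j μ) :
    Tendsto (fun t => ν t (⋃ k ∈ s, A k)) l (𝓝 (μ (⋃ k ∈ s, A k))) := by
  refine tendsto_measure_biUnion_of_inter (P := contBoxes j μ)
    (fun A hA B hB => inter_mem_contBoxes hA hB) ?_ (fun t A hA => contBoxes_lt_top (hν t) hA)
    (fun A hA => contBoxes_lt_top hμ hA) (fun A hA => tendsto_contBoxes hν hμ h hA) s A hA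
  rintro _ ⟨L, M, -, -, -, rfl⟩
  exact measurableSet_box L M

lemma measure_open_le_liminf {j : ℕ} {ι : Type*} {l : Filter ι} [l.NeBot]
    {ν : ι → Measure (ℕ → ℝ≥0)} {μ : Measure (ℕ → ℝ≥0)}
    (hν : ∀ t, MemMOseq (Cle j) (ν t)) (hμ : MemMOseq (Cle j) μ)
    (h : ∀ L, ContLevels μ L → j < (L.image Prod.fst).card →
      Tendsto (fun t => ν t (orthant L)) l (𝓝 (μ (orthant L))))
    {V : Set (ℕ → ℝ≥0)} (hV : IsOpen V) : μ V ≤ liminf (fun t => ν t V) l := by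
  have := sigmaFinite_of_memMOseq hμ
  obtain ⟨T, hT, hTeq⟩ := TopologicalSpace.isOpen_iUnion_countable
    (fun A : {A // A ∈ contBoxes j μ ∧ A ⊆ V} => interior A.1) fun _ => isOpen_interior
  have hcover : V ⊆ Cle j ∪ ⋃ A ∈ T, A.1 := by
    intro x hxV
    by_cases hx : x ∈ Cle j
    · exact Or.inl hx
    obtain ⟨A, hA, hxA, hAV⟩ := exists_contBox_nhds (μ := μ) hx hV hxV
    have hmem : x ∈ ⋃ A : {A // A ∈ contBoxes j μ ∧ A ⊆ V}, interior A.1 :=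
      mem_iUnion.2 ⟨⟨A, hA, hAV⟩, hxA⟩
    rw [← hTeq] at hmem
    exact Or.inr (iUnion₂_mono (fun _ _ => interior_subset) hmem)
  have hle : μ V ≤ μ (⋃ A ∈ T, A.1) := by
    refine (measure_mono hcover).trans ((measure_union_le _ _).trans ?_)
    rw [hμ.1, zero_add]
  refine hle.trans ?_
  rcases T.eq_empty_or_nonempty with rfl | hne
  · simp
  obtain ⟨e, rfl⟩ := hT.exists_eq_range hne
  rw [biUnion_range]
  refine le_of_tendsto' tendsto_measure_iUnion_accumulate fun n => ?_
  have hacc : accumulate (fun n => (e n).1) n = ⋃ k ∈ Finset.range (n + 1), (e k).1 := by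
    simp [accumulate_def]
  rw [hacc, ← (tendsto_biUnion_contBoxes hν hμ h (Finset.range (n + 1)) (fun k => (e k).1)
    fun k _ => (e k).2.1).liminf_eq]
  exact liminf_le_liminf (Eventually.of_forall fun t =>
    measure_mono (iUnion₂_subset fun k _ => (e k).2.2))

/-- If mass is asymptotically not lost on open sets, then neither is the integral of a
nonnegative function with open strict superlevel sets. -/
lemma lintegral_le_liminf_of_open {α ι : Type*} [TopologicalSpace α] [MeasurableSpace α]
    [OpensMeasurableSpace α] {l : Filter ι} [l.IsCountablyGenerated] {ν : ι → Measure α}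
    {μ : Measure α} (h : ∀ V, IsOpen V → μ V ≤ liminf (fun t => ν t V) l)
    {g : α → ℝ} (hg : ∀ x, 0 ≤ g x) (hm : Measurable g) (ho : ∀ s, 0 ≤ s → IsOpen {x | s < g x}) :
    ∫⁻ x, ENNReal.ofReal (g x) ∂μ ≤ liminf (fun t => ∫⁻ x, ENNReal.ofReal (g x) ∂ν t) l := by
  simp only [lintegral_eq_lintegral_meas_lt _ (Eventually.of_forall hg) hm.aemeasurable]
  refine le_trans ?_ (lintegral_liminf_le fun t => Antitone.measurable fun s s' hs =>
    measure_mono fun x (hx : s' < g x) => hs.trans_lt hx)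
  exact setLIntegral_mono' measurableSet_Ioi fun s hs => h _ (ho s (le_of_lt hs))

/-- Points at distance at least `r` from `Cle j` lie in one of finitely many orthants. -/
lemma exists_orthant_cover (j : ℕ) {μ : Measure (ℕ → ℝ≥0)} [SigmaFinite μ] {r : ℝ} (hr : 0 < r) :
    ∃ (s : Finset (Finset ℕ)) (a : ℕ → ℝ≥0), (∀ i, 0 < a i ∧ μ {x | x i = a i} = 0) ∧
      (∀ F ∈ s, F.card = j + 1) ∧
      ∀ x, r ≤ dseqSet x (Cle j) → ∃ F ∈ s, ∀ i ∈ F, a i < x i := by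
  have hq : 0 < (r / 4).toNNReal := Real.toNNReal_pos.2 (by positivity)
  choose a _ ha' ha using fun i => exists_level_between (μ := μ) i hq
  have har : ∀ i, (a i : ℝ) ≤ r / 4 := fun i => by
    have := NNReal.coe_le_coe.2 (ha' i).le
    rwa [Real.coe_toNNReal _ (by positivity)] at this
  have hsum : Summable fun i : ℕ => (2 : ℝ)⁻¹ ^ (i + 1) :=
    (_root_.summable_nat_add_iff 1).2 (summable_geometric_of_lt_one (by norm_num) (by norm_num))
  have hone : ∑' i : ℕ, (2 : ℝ)⁻¹ ^ (i + 1) = 1 := by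
    simp_rw [pow_succ]
    rw [_root_.tsum_mul_right, tsum_geometric_inv_two]
    norm_num
  obtain ⟨N, hN⟩ := ((_root_.tendsto_sum_nat_add fun i : ℕ => (2 : ℝ)⁻¹ ^ (i + 1)).eventually
    (gt_mem_nhds (show (0 : ℝ) < r / 2 by positivity))).exists
  refine ⟨(Finset.range N).powersetCard (j + 1), a, ha,
    fun F hF => (Finset.mem_powersetCard.1 hF).2, fun x hx => ?_⟩
  set S := (Finset.range N).filter fun i => a i < x i
  by_cases hcard : j + 1 ≤ S.card
  · obtain ⟨F, hFS, hF⟩ := Finset.exists_subset_card_eq hcard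
    exact ⟨F, Finset.mem_powersetCard.2 ⟨hFS.trans (Finset.filter_subset _ _), hF⟩,
      fun i hi => (Finset.mem_filter.1 (hFS hi)).2⟩
  exfalso
  let y : ℕ → ℝ≥0 := fun i => if i ∈ S then x i else 0
  have hsub : {i | y i ≠ 0} ⊆ (S : Set ℕ) := fun i hi => by
    by_contra h
    exact hi (if_neg h)
  have hy : y ∈ Cle j := by
    refine ⟨S.finite_toSet.subset hsub, (ncard_le_ncard hsub S.finite_toSet).trans ?_⟩
    rw [ncard_coe_finset]
    omega
  have hhead : ∀ i ∈ Finset.range N,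
      (2 : ℝ)⁻¹ ^ (i + 1) * min (dist (x i) (y i)) 1 ≤ (2 : ℝ)⁻¹ ^ (i + 1) * (r / 4) := by
    intro i hi
    gcongr
    refine (min_le_left _ _).trans ?_
    by_cases hiS : i ∈ S
    · simp only [y, if_pos hiS, dist_self]
      positivity
    · have hxa : x i ≤ a i := by
        by_contra! hlt
        exact hiS (Finset.mem_filter.2 ⟨hi, hlt⟩)
      simp only [y, if_neg hiS, NNReal.dist_eq, NNReal.coe_zero, sub_zero, NNReal.abs_eq]
      exact (NNReal.coe_le_coe.2 hxa).trans (har i)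
  have h1 : ∑ i ∈ Finset.range N, (2 : ℝ)⁻¹ ^ (i + 1) * min (dist (x i) (y i)) 1 ≤ r / 4 := by
    refine (Finset.sum_le_sum hhead).trans ?_
    rw [← Finset.sum_mul]
    refine mul_le_of_le_one_left (by positivity) ?_
    rw [← hone]
    exact hsum.sum_le_tsum _ fun i _ => by positivity
  have h2 : ∑' i, (2 : ℝ)⁻¹ ^ (i + N + 1) * min (dist (x (i + N)) (y (i + N))) 1 ≤
      ∑' i, (2 : ℝ)⁻¹ ^ (i + N + 1) :=
    Summable.tsum_le_tsum (fun i => mul_le_of_le_one_right (by positivity) (min_le_right _ _))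
      ((_root_.summable_nat_add_iff N).2 (summable_dseq x y))
      ((_root_.summable_nat_add_iff N).2 hsum)
  have h3 := (summable_dseq x y).sum_add_tsum_nat_add N
  have h4 := hx.trans (dseqSet_le_dseq x hy)
  unfold dseq at h4
  linarith

lemma eventually_lt_toReal_of_le_liminf {ι : Type*} {l : Filter ι} {u : ι → ℝ≥0∞} {a : ℝ≥0∞}
    (hu : ∀ t, u t ≠ ⊤) (h : a ≤ liminf u l) {x : ℝ} (hx : x < a.toReal) :
    ∀ᶠ t in l, x < (u t).toReal := by
  rcases lt_or_ge x 0 with hx0 | hx0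
  · exact Eventually.of_forall fun t => hx0.trans_le toReal_nonneg
  have hxa : ENNReal.ofReal x < a := (ENNReal.ofReal_lt_ofReal_iff (hx0.trans_lt hx)).2 hx
    |>.trans_le ENNReal.ofReal_toReal_le
  filter_upwards [eventually_lt_of_lt_liminf (hxa.trans_le h)] with t ht
  exact (ENNReal.ofReal_lt_iff_lt_toReal hx0 (hu t)).1 ht

/-- If neither summand loses mass in the limit and the sums converge, so do the summands. -/
lemma tendsto_toReal_of_le_liminf_of_add {ι : Type*} {l : Filter ι} {u v : ι → ℝ≥0∞}
    {a b : ℝ≥0∞} (huv : ∀ t, u t + v t ≠ ⊤) (hab : a + b ≠ ⊤) (ha : a ≤ liminf u l)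
    (hb : b ≤ liminf v l) (h : Tendsto (fun t => u t + v t) l (𝓝 (a + b))) :
    Tendsto (fun t => (u t).toReal) l (𝓝 a.toReal) := by
  have hu : ∀ t, u t ≠ ⊤ := fun t => (ENNReal.add_ne_top.1 (huv t)).1
  have hv : ∀ t, v t ≠ ⊤ := fun t => (ENNReal.add_ne_top.1 (huv t)).2
  have hsum := (ENNReal.tendsto_toReal hab).comp h
  rw [ENNReal.toReal_add (ENNReal.add_ne_top.1 hab).1 (ENNReal.add_ne_top.1 hab).2] at hsum
  refine tendsto_order.2 ⟨fun x hx => eventually_lt_toReal_of_le_liminf hu ha hx, fun x hx => ?_⟩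
  have hε : 0 < (x - a.toReal) / 2 := by linarith
  filter_upwards [eventually_lt_toReal_of_le_liminf hv hb (sub_lt_self b.toReal hε),
    hsum.eventually (gt_mem_nhds (lt_add_of_pos_right _ hε))] with t ht ht'
  simp only [Function.comp_apply, ENNReal.toReal_add (hu t) (hv t)] at ht'
  linarith

/-- The sets `A_{m,i,a} = {x : x_{i_k} > a_k, k = 1,…,m}` (for `m ≥ j`) form a
convergence determining class in `M(O_j)`: if `μ_t(A) → μ(A)` for every such set
that is bounded away from `C_{≤j}` and has `μ(∂A) = 0`, then `μ_t → μ` in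
`M(O_j)` as `t → ∞`. -/
theorem stmt17 (j : ℕ) (hj : 1 ≤ j)
    (μt : ℝ → Measure (ℕ → ℝ≥0)) (μ : Measure (ℕ → ℝ≥0))
    (hμt : ∀ t : ℝ, MemMOseq (Cle j) (μt t)) (hμ : MemMOseq (Cle j) μ)
    (h : ∀ m : ℕ, j ≤ m → ∀ iv : Fin m → ℕ, StrictMono iv →
        ∀ a : Fin m → ℝ≥0, (∀ k, 0 < a k) →
        BddAwaySeq (Cle j) {x : ℕ → ℝ≥0 | ∀ k, a k < x (iv k)} →
        μ (frontier {x : ℕ → ℝ≥0 | ∀ k, a k < x (iv k)}) = 0 →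
        Tendsto (fun t : ℝ => μt t {x : ℕ → ℝ≥0 | ∀ k, a k < x (iv k)}) atTop
          (𝓝 (μ {x : ℕ → ℝ≥0 | ∀ k, a k < x (iv k)}))) :
    ∀ f : (ℕ → ℝ≥0) → ℝ, IsCOseq (Cle j) f →
      Tendsto (fun t : ℝ => ∫ x, f x ∂ μt t) atTop (𝓝 (∫ x, f x ∂ μ)) := by
  rintro f ⟨hcont, hnn, ⟨B, hB⟩, r, hr, hvan⟩
  have hsf := sigmaFinite_of_memMOseq hμ
  have hlim : ∀ L, ContLevels μ L → j < (L.image Prod.fst).card →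
      Tendsto (fun t => μt t (orthant L)) atTop (𝓝 (μ (orthant L))) := by
    intro L hL hc
    have hpos : ∀ p ∈ L, 0 < p.2 := fun p hp => (hL p hp).1
    have hbdd := bddAwaySeq_orthant hpos hc
    have hfr : μ (frontier (orthant L)) = 0 :=
      measure_mono_null (frontier_orthant_subset L)
        ((measure_biUnion_null_iff L.countable_toSet).2 fun p hp => (hL p hp).2)
    obtain ⟨iv, a, hiv, ha, heq⟩ := orthant_eq_setOf_fin L hpos
    rw [heq] at hbdd hfr ⊢
    exact h _ hc.le iv hiv a ha hbdd hfr
  have hopen : ∀ V, IsOpen V → μ V ≤ liminf (fun t => μt t V) atTop :=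
    fun V hV => measure_open_le_liminf hμt hμ hlim hV
  obtain ⟨s, a, ha, hs, hcover⟩ := exists_orthant_cover j (μ := μ) hr
  have hlev : ∀ F : Finset ℕ, ContLevels μ (F.image fun i => (i, a i)) := by
    intro F p hp
    obtain ⟨i, -, rfl⟩ := Finset.mem_image.1 hp
    exact ha i
  have hcard : ∀ F ∈ s, j < ((F.image fun i => (i, a i)).image Prod.fst).card := by
    intro F hF
    rw [image_fst_graph, hs F hF]
    exact j.lt_succ_self
  set U := ⋃ F ∈ s, orthant (F.image fun i => (i, a i))
  have hUopen : IsOpen U := isOpen_biUnion fun F _ => isOpen_orthant _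
  have hUC : U ⊆ (Cle j)ᶜ := iUnion₂_subset fun F hF =>
    orthant_subset_compl (fun p hp => (hlev F p hp).1) (hcard F hF)
  have hUfin : ∀ {ρ}, MemMOseq (Cle j) ρ → ρ U ≠ ⊤ := fun hρ =>
    ((measure_biUnion_lt_top s.finite_toSet fun F hF =>
      orthant_lt_top hρ (fun p hp => (hlev F p hp).1) (hcard F hF))).ne
  have hUlim : Tendsto (fun t => μt t U) atTop (𝓝 (μ U)) :=
    tendsto_biUnion_contBoxes hμt hμ hlim s _ fun F hF =>
      ⟨_, ∅, hlev F, fun p hp => absurd hp (Finset.notMem_empty p), hcard F hF,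
        (box_empty_right _).symm⟩
  have hfU : ∀ x, x ∉ U → f x = 0 := by
    intro x hx
    refine hvan x (lt_of_not_ge fun hle => hx ?_)
    obtain ⟨F, hF, hxF⟩ := hcover x hle
    exact mem_iUnion₂.2 ⟨F, hF, mem_orthant_graph.2 hxF⟩
  have hfcU : ContinuousOn f U := hcont.mono hUC
  have hfopen : ∀ c, 0 ≤ c → IsOpen {x | c < f x} := by
    intro c hc
    have : {x | c < f x} = U ∩ f ⁻¹' Ioi c := by
      ext x
      refine ⟨fun hx => ⟨?_, hx⟩, fun hx => hx.2⟩
      by_contra hxU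
      exact absurd (hfU x hxU) (hc.trans_lt hx).ne'
    rw [this]
    exact hfcU.isOpen_inter_preimage hUopen isOpen_Ioi
  have hfm : Measurable f := by
    refine measurable_of_Ioi fun c => ?_
    rcases lt_or_ge c 0 with hc | hc
    · convert MeasurableSet.univ
      exact eq_univ_of_forall fun x => hc.trans_le (hnn x)
    · exact (hfopen c hc).measurableSet
  let g : (ℕ → ℝ≥0) → ℝ := U.indicator fun x => B - f x
  have hgnn : ∀ x, 0 ≤ g x := fun x => indicator_nonneg (fun x _ => sub_nonneg.2 (hB x)) x
  have hgm : Measurable g := (measurable_const.sub hfm).indicator hUopen.measurableSet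
  have hgopen : ∀ c, 0 ≤ c → IsOpen {x | c < g x} := by
    intro c hc
    have : {x | c < g x} = U ∩ f ⁻¹' Iio (B - c) := by
      ext x
      by_cases hx : x ∈ U
      · simp [g, hx, lt_sub_comm]
      · simp [g, hx, hc]
    rw [this]
    exact hfcU.isOpen_inter_preimage hUopen isOpen_Iio
  have hsum : ∀ ρ : Measure (ℕ → ℝ≥0), ∫⁻ x, ENNReal.ofReal (f x) ∂ρ +
      ∫⁻ x, ENNReal.ofReal (g x) ∂ρ = ENNReal.ofReal B * ρ U := by
    intro ρ
    rw [← lintegral_add_left hfm.ennreal_ofReal, ← lintegral_indicator_const hUopen.measurableSet]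
    refine lintegral_congr fun x => ?_
    rw [← ENNReal.ofReal_add (hnn x) (hgnn x)]
    by_cases hx : x ∈ U
    · simp [g, hx]
    · simp [g, hx, hfU x hx]
  simp only [integral_eq_lintegral_of_nonneg_ae (Eventually.of_forall hnn)
    hfm.aestronglyMeasurable]
  refine tendsto_toReal_of_le_liminf_of_add (v := fun t => ∫⁻ x, ENNReal.ofReal (g x) ∂μt t)
    (b := ∫⁻ x, ENNReal.ofReal (g x) ∂μ) (fun t => ?_) ?_
    (lintegral_le_liminf_of_open hopen hnn hfm hfopen)
    (lintegral_le_liminf_of_open hopen hgnn hgm hgopen) ?_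
  · rw [hsum]
    exact ENNReal.mul_ne_top ENNReal.ofReal_ne_top (hUfin (hμt t))
  · rw [hsum]
    exact ENNReal.mul_ne_top ENNReal.ofReal_ne_top (hUfin hμ)
  · simp only [hsum]
    exact ENNReal.Tendsto.const_mul hUlim (Or.inr ENNReal.ofReal_ne_top)
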